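/- Let R be a Noetherian local ring and M a nonzero finitely generated R-module. If P ∈ Supp_R M and the dimension filtration localizes (i.e., the localizations [D_i]_P of the dimension filtration of M give, after removing repetitions, the dimension filtration of M_P), and M is sequentially Cohen-Macaulay, then M_P is sequentially Cohen-Macaulay over R_P. -/

import Mathlib

/-!
Call a finite strict chain of submodules from `0` to `M` a Cohen-Macaulay filtration if its
successive quotients are Cohen-Macaulay of strictly increasing dimension. A nonzero map into a
Cohen-Macaulay module `N` comes from a module of dimension at least `dim N`; hence a Cohen-Macaulay
filtration is automatically the dimension filtration, and `M` is sequentially Cohen-Macaulay if and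
only if it has a Cohen-Macaulay filtration.

Such filtrations localize. From `depth N ≤ depth N_P + dim R / P` and
`dim N_P + dim R / P ≤ dim N` it follows that if `N` is Cohen-Macaulay and `N_P ≠ 0`, then `N_P` is
Cohen-Macaulay of dimension `dim N - dim R / P`. So localizing the filtration and dropping
repetitions leaves Cohen-Macaulay quotients whose dimensions, all lowered by the same `dim R / P`,
still increase strictly.
-/

open IsLocalRing

/-- The (Krull) dimension of a module: `dim_R M = dim (R / ann_R M)`;
the zero module has dimension `⊥` (i.e. `-∞`). -/
noncomputable def moduleDim (R : Type*) [CommRing R] (M : Type*) [AddCommGroup M]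
    [Module R M] : WithBot ℕ∞ :=
  ringKrullDim (R ⧸ Module.annihilator R M)

/-- `dimLe d n` means `d ≤ n` where `n : ℤ` and `d` is a dimension in `WithBot ℕ∞`
(so for `n < 0` this means `d = ⊥`, i.e. the module is zero). -/
def dimLe (d : WithBot ℕ∞) (n : ℤ) : Prop :=
  if 0 ≤ n then d ≤ ((n.toNat : ℕ∞) : WithBot ℕ∞) else d = ⊥

/-- The depth of a module over a Noetherian local ring: the supremum of lengths of
regular sequences on `M` contained in the maximal ideal. -/
noncomputable def moduleDepth (R : Type*) [CommRing R] [IsLocalRing R] (M : Type*)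
    [AddCommGroup M] [Module R M] : ℕ∞ :=
  sSup {n : ℕ∞ | ∃ rs : List R, (rs.length : ℕ∞) = n ∧
    (∀ r ∈ rs, r ∈ maximalIdeal R) ∧ RingTheory.Sequence.IsRegular M rs}

/-- A module over a Noetherian local ring is Cohen-Macaulay if it is zero or
`depth M = dim M`. -/
def IsCMModule (R : Type*) [CommRing R] [IsLocalRing R] (M : Type*) [AddCommGroup M]
    [Module R M] : Prop :=
  Nontrivial M → (moduleDepth R M : WithBot ℕ∞) = moduleDim R M

/-- A module over a (not necessarily local) commutative ring is Cohen-Macaulay if all its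
localizations at primes are Cohen-Macaulay. -/
def IsCMModuleGen (R : Type*) [CommRing R] (M : Type*) [AddCommGroup M] [Module R M] : Prop :=
  ∀ (P : Ideal R) [P.IsPrime],
    IsCMModule (Localization.AtPrime P) (LocalizedModule P.primeCompl M)

/-- `D : Fin (ℓ+1) → Submodule R M` is the dimension filtration of `M`:
`D 0 = 0`, `D ℓ = M`, the chain is strictly increasing, each `D i` (for `i ≥ 1`) is the
largest submodule of its dimension, and every nonzero submodule which is largest among
submodules of dimension at most its own dimension occurs in the chain. -/
def IsDimFiltration (R : Type*) [CommRing R] (M : Type*) [AddCommGroup M] [Module R M]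
    (ℓ : ℕ) (D : Fin (ℓ + 1) → Submodule R M) : Prop :=
  D 0 = ⊥ ∧ D (Fin.last ℓ) = ⊤ ∧ StrictMono D ∧
  (∀ i : Fin ℓ, IsGreatest
    {N : Submodule R M | moduleDim R ↥N ≤ moduleDim R ↥(D i.succ)} (D i.succ)) ∧
  (∀ N : Submodule R M, N ≠ ⊥ →
    IsGreatest {N' : Submodule R M | moduleDim R ↥N' ≤ moduleDim R ↥N} N → ∃ i, D i = N)

/-- A module over a local ring is sequentially Cohen-Macaulay if the consecutive quotients
of its dimension filtration are Cohen-Macaulay. -/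
def IsSeqCM (R : Type*) [CommRing R] [IsLocalRing R] (M : Type*) [AddCommGroup M]
    [Module R M] : Prop :=
  ∃ (ℓ : ℕ) (D : Fin (ℓ + 1) → Submodule R M), IsDimFiltration R M ℓ D ∧
    ∀ i : Fin ℓ, IsCMModule R
      (↥(D i.succ) ⧸ (D i.castSucc).comap (D i.succ).subtype)

/-- Sequentially Cohen-Macaulay over a not necessarily local ring. -/
def IsSeqCMGen (R : Type*) [CommRing R] (M : Type*) [AddCommGroup M] [Module R M] : Prop :=
  ∃ (ℓ : ℕ) (D : Fin (ℓ + 1) → Submodule R M), IsDimFiltration R M ℓ D ∧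
    ∀ i : Fin ℓ, IsCMModuleGen R
      (↥(D i.succ) ⧸ (D i.castSucc).comap (D i.succ).subtype)

/-- A local ring is sequentially Cohen-Macaulay if it is so as a module over itself. -/
def IsSeqCMRing (R : Type*) [CommRing R] [IsLocalRing R] : Prop := IsSeqCM R R

section Grade

open RingTheory.Sequence CategoryTheory Abelian Limits

universe u v

/-- `N` admits a regular sequence of length `n` in the ideal `I`, i.e. `grade (I, N) ≥ n`. -/
def HasRegularSeq {R : Type*} [CommRing R] (I : Ideal R) (N : Type*) [AddCommGroup N]
    [Module R N] (n : ℕ) : Prop :=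
  ∃ rs : List R, rs.length = n ∧ (∀ r ∈ rs, r ∈ I) ∧ IsRegular N rs

namespace HasRegularSeq

variable {R : Type u} [CommRing R] {I : Ideal R} {N : Type v} [AddCommGroup N] [Module R N] {n : ℕ}

lemma zero [Nontrivial N] : HasRegularSeq I N 0 := ⟨[], rfl, by simp, .nil R N⟩

lemma nontrivial (h : HasRegularSeq I N n) : Nontrivial N :=
  let ⟨_, _, _, hrs⟩ := h
  hrs.nontrivial

lemma succ_iff : HasRegularSeq I N (n + 1) ↔
    ∃ x ∈ I, IsSMulRegular N x ∧ HasRegularSeq I (QuotSMulTop x N) n := by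
  constructor
  · rintro ⟨_ | ⟨x, rs⟩, hl, hI, h⟩
    · simp at hl
    · rw [isRegular_cons_iff] at h
      exact ⟨x, hI x (by simp), h.1, rs, by simpa using hl,
        fun r hr ↦ hI r (by simp [hr]), h.2⟩
  · rintro ⟨x, hx, hreg, rs, hl, hI, h⟩
    exact ⟨x :: rs, by simp [hl], by simpa [hx] using hI, .cons hreg h⟩

lemma congr {N' : Type*} [AddCommGroup N'] [Module R N'] (e : N ≃ₗ[R] N') :
    HasRegularSeq I N n ↔ HasRegularSeq I N' n := by
  simp only [HasRegularSeq, e.isRegular_congr]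

end HasRegularSeq

lemma smul_top_lt_top_of_le_jacobson_bot {R : Type*} [CommRing R] {I : Ideal R} {N : Type*}
    [AddCommGroup N] [Module R N] [Module.Finite R N] [Nontrivial N] (hI : I ≤ Ideal.jacobson ⊥) :
    I • (⊤ : Submodule R N) < ⊤ :=
  (Submodule.top_ne_ideal_smul_of_le_jacobson_annihilator
    (hI.trans (Ideal.jacobson_mono bot_le))).symm.lt_top

variable {R : Type u} [CommRing R] [IsNoetherianRing R] {I : Ideal R} {n : ℕ}

open ModuleCat in
lemma hasRegularSeq_iff_subsingleton_ext [Small.{v} R] {N : Type v} [AddCommGroup N] [Module R N]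
    [Module.Finite R N] (hN : I • (⊤ : Submodule R N) < ⊤) :
    HasRegularSeq I N n ↔
      ∀ i < n, Subsingleton (Ext (of R (Shrink.{v} (R ⧸ I))) (of R N) i) :=
  (exists_isRegular_tfae I n (of R N) hN).out 3 1

namespace HasRegularSeq

-- By Rees' theorem both sides are vanishing conditions on `Ext (R ⧸ I) _`, to be compared by the
-- long exact sequence of `0 → N → N → N ⧸ y N → 0`.
lemma quotSMulTop_of_small [Small.{v} R] {N : Type v} [AddCommGroup N] [Module R N]
    [Module.Finite R N] (hI : I ≤ Ideal.jacobson ⊥) (h : HasRegularSeq I N (n + 1)) {y : R}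
    (hy : y ∈ I) (hyN : IsSMulRegular N y) : HasRegularSeq I (QuotSMulTop y N) n := by
  have := h.nontrivial
  have : Nontrivial (QuotSMulTop y N) := Submodule.Quotient.nontrivial_iff.mpr
    (Submodule.top_ne_pointwise_smul_of_mem_jacobson_annihilator
      (Ideal.jacobson_mono bot_le (hI hy))).symm
  rw [hasRegularSeq_iff_subsingleton_ext (smul_top_lt_top_of_le_jacobson_bot hI)] at h ⊢
  intro i hi
  have hleft := AddCommGrpCat.isZero_of_iff_subsingleton.mpr (h i (by lia))
  have hright := AddCommGrpCat.isZero_of_iff_subsingleton.mpr (h (i + 1) (by lia))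
  exact AddCommGrpCat.subsingleton_of_isZero <| ShortComplex.Exact.isZero_of_both_zeros
    (Ext.covariant_sequence_exact₃' _
      (IsSMulRegular.smulShortComplex_shortExact (M := ModuleCat.of R N) hyN) i (i + 1) rfl)
    (hleft.eq_zero_of_src _) (hright.eq_zero_of_tgt _)

variable {N : Type v} [AddCommGroup N] [Module R N] [Module.Finite R N]

lemma quotSMulTop (hI : I ≤ Ideal.jacobson ⊥) (h : HasRegularSeq I N (n + 1)) {y : R}
    (hy : y ∈ I) (hyN : IsSMulRegular N y) : HasRegularSeq I (QuotSMulTop y N) n := by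
  let e : ULift.{u} N ≃ₗ[R] N := ULift.moduleEquiv
  exact (congr (QuotSMulTop.congr y e)).mp
    (quotSMulTop_of_small hI ((congr e).mpr h) hy ((e.isSMulRegular_congr y).mpr hyN))

end HasRegularSeq

end Grade

section Torsion

open Submodule
open scoped Pointwise

variable {R : Type*} [CommRing R] [IsNoetherianRing R] {N : Type*} [AddCommGroup N] [Module R N]

lemma torsionBySet_ne_bot_of_isAssociatedPrime {q : Ideal R} (hq : IsAssociatedPrime q N) :
    torsionBySet R N q ≠ ⊥ := by
  obtain ⟨hprime, v, hv⟩ := isAssociatedPrime_iff.mp hq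
  refine (Submodule.ne_bot_iff _).mpr ⟨v, (mem_torsionBySet_iff _ _).mpr fun r ↦ ?_, ?_⟩
  · simpa [hv] using r.2
  · rintro rfl
    exact hprime.ne_top (by simp [hv])

variable [Module.Finite R N]

lemma exists_isSMulRegular_of_torsionBySet_eq_bot {I : Ideal R} (h : torsionBySet R N I = ⊥) :
    ∃ x ∈ I, IsSMulRegular N x := by
  have : Subsingleton ((R ⧸ I) →ₗ[R] N) := subsingleton_of_forall_eq 0 fun f ↦ by
    have hf : f 1 ∈ torsionBySet R N I := (mem_torsionBySet_iff _ _).mpr fun r ↦ by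
      rw [← map_smul, Algebra.smul_def, mul_one, Ideal.Quotient.algebraMap_eq,
        Ideal.Quotient.eq_zero_iff_mem.mpr r.2, map_zero]
    rw [h, mem_bot] at hf
    ext
    simpa using hf
  simpa only [Ideal.annihilator_quotient] using IsSMulRegular.subsingleton_linearMap_iff.mp this

lemma torsionBySet_eq_bot_of_le_smul_top {s : Set R} {x : R}
    (hx : x ∈ Ideal.jacobson (⊥ : Ideal R)) (hxN : IsSMulRegular N x)
    (h : torsionBySet R N s ≤ x • ⊤) : torsionBySet R N s = ⊥ := by
  have hle : torsionBySet R N s ≤ x • torsionBySet R N s := fun w hw ↦ by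
    obtain ⟨v, -, rfl⟩ := (mem_smul_pointwise_iff_exists _ _ _).mp (h hw)
    rw [mem_torsionBySet_iff] at hw
    refine smul_mem_pointwise_smul _ _ _ ((mem_torsionBySet_iff _ _).mpr fun a ↦ ?_)
    exact hxN.right_eq_zero_of_smul (by rw [smul_comm]; exact hw a)
  refine eq_bot_of_le_smul_of_le_jacobson_bot (Ideal.span {x}) _ (IsNoetherian.noetherian _)
    (by rwa [ideal_span_singleton_smul]) ?_
  rwa [Ideal.span_singleton_le_iff_mem]

lemma exists_lt_torsionBySet_quotSMulTop_ne_bot {q : PrimeSpectrum R}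
    (hq : torsionBySet R N q.asIdeal ≠ ⊥) {x : R} (hx : x ∈ Ideal.jacobson (⊥ : Ideal R))
    (hxN : IsSMulRegular N x) :
    ∃ q', q < q' ∧ torsionBySet R (QuotSMulTop x N) q'.asIdeal ≠ ⊥ := by
  obtain ⟨w, hwq, hw⟩ := SetLike.not_le_iff_exists.mp
    (mt (torsionBySet_eq_bot_of_le_smul_top hx hxN) hq)
  obtain ⟨q', hq', hle⟩ := exists_le_isAssociatedPrime_of_isNoetherianRing R
    (Submodule.Quotient.mk w : QuotSMulTop x N) (by rwa [ne_eq, Submodule.Quotient.mk_eq_zero])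
  have mem_of_smul_mem (r : R) (hr : r • w ∈ x • (⊤ : Submodule R N)) : r ∈ q' := hle <| by
    rwa [mem_colon_singleton, mem_bot, ← Submodule.Quotient.mk_smul,
      Submodule.Quotient.mk_eq_zero]
  have hxq' : x ∈ q' := mem_of_smul_mem x (smul_mem_pointwise_smul _ _ _ trivial)
  have hxq : x ∉ q.asIdeal := fun hxq ↦ hq <| eq_bot_iff.mpr fun u hu ↦
    hxN.right_eq_zero_of_smul ((mem_torsionBySet_iff _ _).mp hu ⟨x, hxq⟩)
  refine ⟨⟨q', hq'.isPrime⟩, lt_of_le_not_ge (fun r hr ↦ mem_of_smul_mem r ?_)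
    fun h ↦ hxq (h hxq'), torsionBySet_ne_bot_of_isAssociatedPrime hq'⟩
  rw [(mem_torsionBySet_iff _ _).mp hwq ⟨r, hr⟩]
  exact zero_mem _

end Torsion

namespace HasRegularSeq

variable {R : Type*} [CommRing R] [IsNoetherianRing R] {I : Ideal R} {N : Type*} [AddCommGroup N]
  [Module R N] [Module.Finite R N] {n : ℕ}

lemma le_coheight (hI : I ≤ Ideal.jacobson ⊥) (h : HasRegularSeq I N n) {q : PrimeSpectrum R}
    (hq : Submodule.torsionBySet R N q.asIdeal ≠ ⊥) : n ≤ Order.coheight q := by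
  induction n generalizing N q with
  | zero => simp
  | succ n ih =>
    obtain ⟨x, hx, hxN, h⟩ := succ_iff.mp h
    obtain ⟨q', hlt, hq'⟩ := exists_lt_torsionBySet_quotSMulTop_ne_bot hq (hI hx) hxN
    push_cast
    grw [ih h hq']
    exact Order.coheight_add_one_le hlt

lemma exists_le_coheight_add (hI : I ≤ Ideal.jacobson ⊥) (h : HasRegularSeq I N n)
    {P : PrimeSpectrum R} (hP : P.asIdeal ≤ I) :
    ∃ e : ℕ, HasRegularSeq P.asIdeal N e ∧ (n : ℕ∞) ≤ e + Order.coheight P := by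
  have := h.nontrivial
  induction n generalizing N with
  | zero => exact ⟨0, .zero, by simp⟩
  | succ n ih =>
    by_cases hPN : Submodule.torsionBySet R N P.asIdeal = ⊥
    · obtain ⟨y, hy, hyN⟩ := exists_isSMulRegular_of_torsionBySet_eq_bot hPN
      have h' := h.quotSMulTop hI (hP hy) hyN
      obtain ⟨e, he, hle⟩ := ih h' h'.nontrivial
      refine ⟨e + 1, succ_iff.mpr ⟨y, hy, hyN, he⟩, ?_⟩
      push_cast
      grw [hle, add_right_comm]
    · exact ⟨0, .zero, by simpa using h.le_coheight hI hPN⟩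

end HasRegularSeq

section Dimension

open Module Order

lemma coheight_coe_of_isUpperSet {α : Type*} [Preorder α] {s : Set α} (hs : IsUpperSet s) (a : s) :
    coheight (a : α) = coheight a :=
  (coheight_eq_of_strictMono (fun a : s ↦ (a : α)) (fun _ _ h ↦ h)
    (fun a b hab ↦ ⟨⟨b, hs hab.le a.2⟩, hab, rfl⟩) a).symm

variable {R : Type*} [CommRing R] {N : Type*} [AddCommGroup N] [Module R N]

variable (R N) in
lemma isUpperSet_support : IsUpperSet (support R N) := fun _ _ ↦ mem_support_mono

variable (R N) in
lemma moduleDim_eq_supportDim [Module.Finite R N] : moduleDim R N = supportDim R N :=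
  (supportDim_eq_ringKrullDim_quotient_annihilator R N).symm

variable (R N) in
lemma supportDim_eq_iSup_coheight :
    supportDim R N = ⨆ p ∈ support R N, (coheight p : WithBot ℕ∞) := by
  rw [supportDim, krullDim_eq_iSup_coheight, iSup_subtype']
  simp only [coheight_coe_of_isUpperSet (isUpperSet_support R N)]

lemma coheight_le_supportDim {p : PrimeSpectrum R} (hp : p ∈ support R N) :
    (coheight p : WithBot ℕ∞) ≤ supportDim R N := by
  rw [supportDim_eq_iSup_coheight]
  exact le_iSup₂ (f := fun p _ ↦ (coheight p : WithBot ℕ∞)) p hp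

lemma supportDim_eq_max_of_exact {L Q : Type*} [AddCommGroup L] [Module R L] [AddCommGroup Q]
    [Module R Q] {f : L →ₗ[R] N} {g : N →ₗ[R] Q} (hfg : Function.Exact f g)
    (hf : Function.Injective f) (hg : Function.Surjective g) :
    supportDim R N = max (supportDim R L) (supportDim R Q) := by
  simp only [supportDim_eq_iSup_coheight, support_of_exact hfg hf hg, iSup_union]

section Localization

variable {N' : Type*} [AddCommGroup N'] [Module R N']

lemma support_subset_of_isLocalizedModule (s : Submonoid R) (f : N →ₗ[R] N')
    [IsLocalizedModule s f] : support R N' ⊆ support R N := by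
  intro q hq
  obtain ⟨m, hm⟩ := mem_support_iff'.mp hq
  obtain ⟨⟨n, t⟩, ht⟩ := IsLocalizedModule.surj s f m
  refine mem_support_iff'.mpr ⟨n, fun r hr hrn ↦ hm r hr ?_⟩
  apply IsLocalizedModule.smul_injective f t
  simp only [smul_zero, smul_comm t r m, ht, ← map_smul, hrn, map_zero]

lemma mem_support_of_isLocalizedModule (P : Ideal R) [hP : P.IsPrime] (f : N →ₗ[R] N')
    [IsLocalizedModule P.primeCompl f] [Nontrivial N'] :
    (⟨P, hP⟩ : PrimeSpectrum R) ∈ support R N :=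
  (IsLocalizedModule.iso P.primeCompl f).toEquiv.nontrivial

variable (S : Type*) [CommRing S] [Algebra R S] (P : Ideal R) [hP : P.IsPrime]
  [IsLocalization.AtPrime S P] [Module S N'] [IsScalarTower R S N']

lemma supportDim_le_height (f : N →ₗ[R] N') [IsLocalizedModule P.primeCompl f]
    (hPN : ⟨P, hP⟩ ∈ support R N) :
    supportDim S N' ≤ height (⟨⟨P, hP⟩, hPN⟩ : support R N) := by
  rw [height_eq_krullDim_Iic]
  have comap_mem (q : support S N') : q.1.comap (algebraMap R S) ∈ support R N :=
    support_subset_of_isLocalizedModule P.primeCompl f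
      (support_subset_preimage_comap (R := R) (A := S) (M := N') q.2)
  let e := IsLocalization.AtPrime.primeSpectrumOrderIso S P
  exact krullDim_le_of_strictMono
    (fun q ↦ ⟨⟨q.1.comap (algebraMap R S), comap_mem q⟩, (e q).2⟩) fun q q' h ↦ e.strictMono h

lemma supportDim_add_coheight_le (f : N →ₗ[R] N') [IsLocalizedModule P.primeCompl f] :
    supportDim S N' + coheight (⟨P, hP⟩ : PrimeSpectrum R) ≤ supportDim R N := by
  rcases subsingleton_or_nontrivial N' with h | h
  · simp [supportDim_eq_bot_of_subsingleton]
  have hPN := mem_support_of_isLocalizedModule P f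
  have : Nonempty (support R N) := ⟨_, hPN⟩
  grw [supportDim_le_height S P f hPN,
    coheight_coe_of_isUpperSet (isUpperSet_support R N) ⟨_, hPN⟩, supportDim,
    krullDim_eq_iSup_height_add_coheight_of_nonempty, ← WithBot.coe_add, WithBot.coe_le_coe]
  exact le_iSup (fun a : support R N ↦ height a + coheight a) ⟨_, hPN⟩

end Localization

end Dimension

section CohenMacaulay

open Module Order

lemma moduleDepth_le_iff {R : Type*} [CommRing R] [IsLocalRing R] {N : Type*} [AddCommGroup N]
    [Module R N] {d : ℕ∞} :
    moduleDepth R N ≤ d ↔ ∀ n : ℕ, HasRegularSeq (maximalIdeal R) N n → n ≤ d :=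
  sSup_le_iff.trans ⟨fun h n ⟨rs, hl, hrs⟩ ↦ h n ⟨rs, congrArg _ hl, hrs⟩,
    fun h _ ⟨rs, hl, hrs⟩ ↦ hl ▸ h _ ⟨rs, rfl, hrs⟩⟩

lemma HasRegularSeq.le_moduleDepth {R : Type*} [CommRing R] [IsLocalRing R] {N : Type*}
    [AddCommGroup N] [Module R N] {n : ℕ} (h : HasRegularSeq (maximalIdeal R) N n) :
    n ≤ moduleDepth R N :=
  moduleDepth_le_iff.mp le_rfl n h

lemma HasRegularSeq.of_isLocalizedModule {R : Type*} [CommRing R] {N : Type*} [AddCommGroup N]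
    [Module R N] {n : ℕ} (S : Type*) [CommRing S] [Algebra R S] [IsLocalRing S]
    {P : Ideal R} [P.IsPrime] [IsLocalization.AtPrime S P] {N' : Type*} [AddCommGroup N']
    [Module R N'] [Module S N'] [IsScalarTower R S N'] [Module.Finite S N'] [Nontrivial N']
    (f : N →ₗ[R] N') [IsLocalizedModule P.primeCompl f] (h : HasRegularSeq P N n) :
    HasRegularSeq (maximalIdeal S) N' n := by
  obtain ⟨rs, rfl, hmem, hrs⟩ := h
  refine ⟨rs.map (algebraMap R S), by simp, fun r hr ↦ ?_,
    hrs.1.isRegular_of_isLocalizedModule_of_mem S P f hmem⟩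
  obtain ⟨r, hrs, rfl⟩ := List.mem_map.mp hr
  exact (IsLocalization.AtPrime.to_map_mem_maximal_iff S P r).mpr (hmem r hrs)

variable {R : Type*} [CommRing R] [IsNoetherianRing R] [IsLocalRing R]
  {N : Type*} [AddCommGroup N] [Module R N] [Module.Finite R N]

lemma moduleDepth_le_coheight {q : PrimeSpectrum R}
    (hq : Submodule.torsionBySet R N q.asIdeal ≠ ⊥) : moduleDepth R N ≤ coheight q :=
  moduleDepth_le_iff.mpr fun _ h ↦ h.le_coheight (maximalIdeal_le_jacobson _) hq

lemma moduleDepth_le_supportDim_of_ne_zero {L : Type*} [AddCommGroup L] [Module R L]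
    {f : L →ₗ[R] N} (hf : f ≠ 0) : moduleDepth R N ≤ supportDim R L := by
  obtain ⟨w, hw⟩ := DFunLike.ne_iff.mp hf
  obtain ⟨q, hq, hle⟩ := exists_le_isAssociatedPrime_of_isNoetherianRing R (f w) hw
  have hqL : ⟨q, hq.isPrime⟩ ∈ support R L :=
    mem_support_iff'.mpr ⟨w, fun r hr hrw ↦ hr <| hle <| by
      rw [Submodule.mem_colon_singleton, Submodule.mem_bot, ← map_smul, hrw, map_zero]⟩
  grw [← coheight_le_supportDim hqL, WithBot.coe_le_coe]
  exact moduleDepth_le_coheight (torsionBySet_ne_bot_of_isAssociatedPrime hq)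

lemma moduleDepth_le_supportDim [Nontrivial N] : moduleDepth R N ≤ supportDim R N := by
  obtain ⟨w, hw⟩ := exists_ne (0 : N)
  exact moduleDepth_le_supportDim_of_ne_zero (f := .id) (DFunLike.ne_iff.mpr ⟨w, hw⟩)

lemma IsCMModule.supportDim_le_of_ne_zero (h : IsCMModule R N) {L : Type*} [AddCommGroup L]
    [Module R L] {f : L →ₗ[R] N} (hf : f ≠ 0) : supportDim R N ≤ supportDim R L := by
  obtain ⟨w, hw⟩ := DFunLike.ne_iff.mp hf
  rw [← moduleDim_eq_supportDim, ← h ⟨_, _, hw⟩]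
  exact moduleDepth_le_supportDim_of_ne_zero hf

variable (S : Type*) [CommRing S] [Algebra R S] [IsLocalRing S] (P : Ideal R)
  [hP : P.IsPrime] [IsLocalization.AtPrime S P] {N' : Type*} [AddCommGroup N'] [Module R N']
  [Module S N'] [IsScalarTower R S N'] [Module.Finite S N']

lemma moduleDepth_le_moduleDepth_add_coheight [Nontrivial N'] (f : N →ₗ[R] N')
    [IsLocalizedModule P.primeCompl f] :
    moduleDepth R N ≤ moduleDepth S N' + coheight (⟨P, hP⟩ : PrimeSpectrum R) :=
  moduleDepth_le_iff.mpr fun n h ↦ by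
    obtain ⟨e, he, hle⟩ := h.exists_le_coheight_add (maximalIdeal_le_jacobson _)
      (P := ⟨P, hP⟩) (le_maximalIdeal hP.ne_top)
    grw [hle, (he.of_isLocalizedModule S f).le_moduleDepth]

namespace IsCMModule

lemma supportDim_le_moduleDepth_add_coheight [Nontrivial N'] (h : IsCMModule R N) (f : N →ₗ[R] N')
    [IsLocalizedModule P.primeCompl f] :
    supportDim R N ≤ moduleDepth S N' + coheight (⟨P, hP⟩ : PrimeSpectrum R) := by
  have : Nontrivial N := nonempty_support_iff.mp ⟨_, mem_support_of_isLocalizedModule P f⟩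
  rw [← moduleDim_eq_supportDim, ← h this]
  exact_mod_cast moduleDepth_le_moduleDepth_add_coheight S P f

variable [IsNoetherianRing S]

lemma supportDim_add_coheight [Nontrivial N'] (h : IsCMModule R N) (f : N →ₗ[R] N')
    [IsLocalizedModule P.primeCompl f] :
    supportDim S N' + coheight (⟨P, hP⟩ : PrimeSpectrum R) = supportDim R N := by
  refine (supportDim_add_coheight_le S P f).antisymm ?_
  grw [h.supportDim_le_moduleDepth_add_coheight S P f, moduleDepth_le_supportDim]

lemma of_isLocalizedModule (h : IsCMModule R N) (f : N →ₗ[R] N')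
    [IsLocalizedModule P.primeCompl f] :
    IsCMModule S N' := by
  intro _
  rw [moduleDim_eq_supportDim]
  refine moduleDepth_le_supportDim.antisymm ?_
  rw [← (ENat.addLECancellable_of_lt_top
    (coheight_lt_top (⟨P, hP⟩ : PrimeSpectrum R))).withBot.add_le_add_iff_right]
  exact (h.supportDim_add_coheight S P f).trans_le
    (h.supportDim_le_moduleDepth_add_coheight S P f)

end IsCMModule

end CohenMacaulay

section Chain

variable {ℓ : ℕ}

lemma exists_not_castSucc_and_succ {p : Fin (ℓ + 1) → Prop} (h0 : ¬ p 0) (hlast : p (Fin.last ℓ)) :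
    ∃ j : Fin ℓ, ¬ p j.castSucc ∧ p j.succ := by
  by_contra! h
  exact Fin.induction (motive := (¬ p ·)) h0 h _ hlast

lemma exists_strictMono_of_monotone {α : Type*} [PartialOrder α] {F : Fin (ℓ + 1) → α}
    (hF : Monotone F) :
    ∃ (m : ℕ) (G : Fin (m + 1) → α) (σ : Fin m → Fin ℓ), StrictMono G ∧ StrictMono σ ∧
      G 0 = F 0 ∧ G (Fin.last m) = F (Fin.last ℓ) ∧
      ∀ j, G j.castSucc = F (σ j).castSucc ∧ G j.succ = F (σ j).succ := by
  induction ℓ with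
  | zero => exact ⟨0, F, id, Fin.strictMono_iff_lt_succ.mpr nofun, strictMono_id, rfl, rfl, nofun⟩
  | succ ℓ ih =>
    obtain ⟨m, G, σ, hG, hσ, hG0, hGlast, hstep⟩ :=
      ih (F := fun i ↦ F i.succ) (hF.comp Fin.strictMono_succ.monotone)
    rcases (hF (Fin.zero_le 1)).eq_or_lt with h | h
    · exact ⟨m, G, Fin.succ ∘ σ, hG, Fin.strictMono_succ.comp hσ, hG0.trans h.symm, hGlast, hstep⟩
    · refine ⟨m + 1, Fin.cons (F 0) G, Fin.cons 0 (Fin.succ ∘ σ), ?_, ?_, rfl, hGlast, ?_⟩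
      · exact Fin.strictMono_cons.mpr
          ⟨fun j ↦ (h.trans_eq hG0.symm).trans_le (hG.monotone j.zero_le), hG⟩
      · exact Fin.strictMono_cons.mpr ⟨fun _ ↦ Fin.succ_pos _, Fin.strictMono_succ.comp hσ⟩
      · exact Fin.cases ⟨rfl, hG0⟩ hstep

end Chain

section Subquotient

open Module

/-- The subquotient `B / (A ∩ B)` of a module given by two of its submodules; it is `B / A` in the
usual case `A ≤ B`. -/
abbrev Subquotient {R M : Type*} [CommRing R] [AddCommGroup M] [Module R M]
    (A B : Submodule R M) : Type _ :=
  ↥B ⧸ A.comap B.subtype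

variable {R : Type*} [CommRing R] {M : Type*} [AddCommGroup M] [Module R M] {A B : Submodule R M}

lemma nontrivial_subquotient_iff : Nontrivial (Subquotient A B) ↔ ¬ B ≤ A := by
  rw [Submodule.Quotient.nontrivial_iff, ne_eq, Submodule.comap_subtype_eq_top]

lemma supportDim_eq_max_subquotient (h : A ≤ B) :
    supportDim R B = max (supportDim R A) (supportDim R (Subquotient A B)) :=
  supportDim_eq_max_of_exact (f := Submodule.inclusion h) (g := Submodule.mkQ _)
    (LinearMap.exact_iff.mpr (by rw [Submodule.ker_mkQ, Submodule.range_inclusion]))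
    (Submodule.inclusion_injective h) (Submodule.mkQ_surjective _)

variable (S : Type*) [CommRing S] [Algebra R S] (p : Submonoid R) [IsLocalization p S]
  {M' : Type*} [AddCommGroup M'] [Module R M'] [Module S M'] [IsScalarTower R S M']
  (f : M →ₗ[R] M') [IsLocalizedModule p f]

variable (A B) in
lemma comap_subtype_localized' :
    (A.comap B.subtype).localized' S p (B.toLocalized' S p f) =
      (A.localized' S p f).comap (B.localized' S p f).subtype := by
  apply Submodule.map_injective_of_injective (B.localized' S p f).injective_subtype
  calc ((A.comap B.subtype).localized' S p (B.toLocalized' S p f)).map (B.localized' S p f).subtype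
    _ = ((A.comap B.subtype).map B.subtype).localized' S p f := by
      simp only [Submodule.localized'_eq_span, Submodule.map_span, Submodule.map_coe,
        Set.image_image]
      rfl
    _ = ((A.localized' S p f).comap (B.localized' S p f).subtype).map
        (B.localized' S p f).subtype := by
      simp only [Submodule.map_comap_subtype, Submodule.localized'_inf]

variable (A B) in
lemma exists_isLocalizedModule_subquotient :
    ∃ g : Subquotient A B →ₗ[R] Subquotient (A.localized' S p f) (B.localized' S p f),
      IsLocalizedModule p g := by
  unfold Subquotient
  rw [← comap_subtype_localized']
  exact ⟨(A.comap B.subtype).toLocalizedQuotient' S p (B.toLocalized' S p f), inferInstance⟩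

end Subquotient

section Filtration

open Module

lemma IsDimFiltration.strictMono_supportDim {R : Type*} [CommRing R] [IsNoetherianRing R]
    {M : Type*} [AddCommGroup M] [Module R M] [Module.Finite R M] {ℓ : ℕ}
    {F : Fin (ℓ + 1) → Submodule R M} (hF : IsDimFiltration R M ℓ F) :
    StrictMono fun i ↦ supportDim R (F i) := by
  obtain ⟨hzero, -, hmono, hgreatest, -⟩ := hF
  simp only [moduleDim_eq_supportDim] at hgreatest
  intro i j hij
  cases i using Fin.cases with
  | zero =>
    have : Nontrivial (F j) := (F j).nontrivial_iff_ne_bot.mpr (hzero ▸ hmono hij).ne'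
    change supportDim R (F 0) < supportDim R (F j)
    rw [hzero, supportDim_eq_bot_of_subsingleton, bot_lt_iff_ne_bot]
    exact supportDim_ne_bot_of_nontrivial R (F j)
  | succ i => exact lt_of_not_ge fun hle ↦ (hmono hij).not_ge ((hgreatest i).2 hle)

/-- A Cohen-Macaulay filtration of `M`: a strict chain of submodules from `⊥` to `⊤` whose
successive quotients are Cohen-Macaulay of strictly increasing dimension. -/
structure IsCMFiltration {R M : Type*} [CommRing R] [IsLocalRing R] [AddCommGroup M] [Module R M]
    {ℓ : ℕ} (F : Fin (ℓ + 1) → Submodule R M) : Prop where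
  zero : F 0 = ⊥
  last : F (Fin.last ℓ) = ⊤
  strictMono : StrictMono F
  isCMModule (i : Fin ℓ) : IsCMModule R (Subquotient (F i.castSucc) (F i.succ))
  strictMono_supportDim :
    StrictMono fun i : Fin ℓ ↦ supportDim R (Subquotient (F i.castSucc) (F i.succ))

variable {R : Type*} [CommRing R] [IsLocalRing R] {M : Type*} [AddCommGroup M] [Module R M]
  {ℓ : ℕ} {F : Fin (ℓ + 1) → Submodule R M}

namespace IsCMFiltration

lemma supportDim_lt (hF : IsCMFiltration F) {k : Fin (ℓ + 1)} {i : Fin ℓ} (hki : k ≤ i.castSucc) :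
    supportDim R (F k) < supportDim R (Subquotient (F i.castSucc) (F i.succ)) := by
  induction k using Fin.induction with
  | zero =>
    have := nontrivial_subquotient_iff.mpr (hF.strictMono i.castSucc_lt_succ).not_ge
    rw [hF.zero, supportDim_eq_bot_of_subsingleton, bot_lt_iff_ne_bot]
    exact supportDim_ne_bot_of_nontrivial R _
  | succ j ih =>
    have hji : j < i := Fin.succ_le_castSucc_iff.mp hki
    rw [supportDim_eq_max_subquotient (hF.strictMono j.castSucc_lt_succ).le]
    exact max_lt (ih (Fin.castSucc_le_castSucc_iff.mpr hji.le)) (hF.strictMono_supportDim hji)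

lemma supportDim_succ (hF : IsCMFiltration F) (i : Fin ℓ) :
    supportDim R (F i.succ) = supportDim R (Subquotient (F i.castSucc) (F i.succ)) := by
  rw [supportDim_eq_max_subquotient (hF.strictMono i.castSucc_lt_succ).le,
    max_eq_right (hF.supportDim_lt le_rfl).le]

lemma exists_le_succ_and_supportDim_le [IsNoetherianRing R] [Module.Finite R M]
    (hF : IsCMFiltration F) {N : Submodule R M} (hN : N ≠ ⊥) :
    ∃ j : Fin ℓ, N ≤ F j.succ ∧ supportDim R (F j.succ) ≤ supportDim R N := by
  obtain ⟨j, hj, hj'⟩ := exists_not_castSucc_and_succ (p := (N ≤ F ·))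
    (by rwa [hF.zero, le_bot_iff]) (hF.last.symm ▸ le_top)
  refine ⟨j, hj', (hF.supportDim_succ j).trans_le ?_⟩
  refine (hF.isCMModule j).supportDim_le_of_ne_zero
    (f := (Submodule.mkQ _).comp (Submodule.inclusion hj')) ?_
  obtain ⟨w, hw, hw'⟩ := SetLike.not_le_iff_exists.mp hj
  refine DFunLike.ne_iff.mpr ⟨⟨w, hw⟩, ?_⟩
  simpa using hw'

lemma isDimFiltration [IsNoetherianRing R] [Module.Finite R M] (hF : IsCMFiltration F) :
    IsDimFiltration R M ℓ F := by
  simp only [IsDimFiltration, moduleDim_eq_supportDim]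
  have le_of_supportDim_le {N : Submodule R M} {i : Fin ℓ}
      (h : supportDim R N ≤ supportDim R (F i.succ)) : N ≤ F i.succ := by
    rcases eq_or_ne N ⊥ with rfl | hN
    · exact bot_le
    obtain ⟨j, hNj, hj⟩ := hF.exists_le_succ_and_supportDim_le hN
    have hji := hj.trans h
    rw [hF.supportDim_succ, hF.supportDim_succ, hF.strictMono_supportDim.le_iff_le] at hji
    exact hNj.trans (hF.strictMono.monotone (Fin.succ_le_succ_iff.mpr hji))
  refine ⟨hF.zero, hF.last, hF.strictMono, fun i ↦ ⟨le_refl (supportDim R _),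
    fun N h ↦ le_of_supportDim_le h⟩, fun N hN hgreatest ↦ ?_⟩
  obtain ⟨j, hNj, hj⟩ := hF.exists_le_succ_and_supportDim_le hN
  exact ⟨j.succ, (hgreatest.2 hj).antisymm hNj⟩

end IsCMFiltration

lemma IsDimFiltration.isCMFiltration [IsNoetherianRing R] [Module.Finite R M]
    (hF : IsDimFiltration R M ℓ F)
    (hCM : ∀ i : Fin ℓ, IsCMModule R (Subquotient (F i.castSucc) (F i.succ))) :
    IsCMFiltration F := by
  have hdim := hF.strictMono_supportDim
  have supportDim_subquotient (i : Fin ℓ) :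
      supportDim R (Subquotient (F i.castSucc) (F i.succ)) = supportDim R (F i.succ) := by
    have hlt : supportDim R (F i.castSucc) < supportDim R (F i.succ) := hdim i.castSucc_lt_succ
    rw [supportDim_eq_max_subquotient (hF.2.2.1 i.castSucc_lt_succ).le] at hlt ⊢
    exact (max_eq_right_of_lt ((lt_max_iff.mp hlt).resolve_left (lt_irrefl _))).symm
  refine ⟨hF.1, hF.2.1, hF.2.2.1, hCM, ?_⟩
  simp only [supportDim_subquotient]
  exact hdim.comp Fin.strictMono_succ

variable (R M) in
lemma isSeqCM_iff_exists_isCMFiltration [IsNoetherianRing R] [Module.Finite R M] :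
    IsSeqCM R M ↔ ∃ (ℓ : ℕ) (F : Fin (ℓ + 1) → Submodule R M), IsCMFiltration F :=
  ⟨fun ⟨ℓ, D, hD, hCM⟩ ↦ ⟨ℓ, D, hD.isCMFiltration hCM⟩,
    fun ⟨ℓ, F, hF⟩ ↦ ⟨ℓ, F, hF.isDimFiltration, hF.isCMModule⟩⟩

lemma IsCMFiltration.exists_of_isLocalizedModule [IsNoetherianRing R] [Module.Finite R M]
    (hF : IsCMFiltration F) (S : Type*) [CommRing S] [Algebra R S] [IsLocalRing S]
    [IsNoetherianRing S] (P : Ideal R) [hP : P.IsPrime] [IsLocalization.AtPrime S P] {M' : Type*}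
    [AddCommGroup M'] [Module R M'] [Module S M'] [IsScalarTower R S M'] [Module.Finite S M']
    (f : M →ₗ[R] M') [IsLocalizedModule P.primeCompl f] :
    ∃ (m : ℕ) (G : Fin (m + 1) → Submodule S M'), IsCMFiltration G := by
  have hmono : Monotone fun i ↦ (F i).localized' S P.primeCompl f :=
    (Submodule.localized'gi S P.primeCompl f).gc.monotone_l.comp hF.strictMono.monotone
  obtain ⟨m, G, σ, hG, hσ, hG0, hGlast, hstep⟩ := exists_strictMono_of_monotone hmono
  have exists_localization (j : Fin m) :
      ∃ g : Subquotient (F (σ j).castSucc) (F (σ j).succ) →ₗ[R]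
        Subquotient (G j.castSucc) (G j.succ), IsLocalizedModule P.primeCompl g := by
    rw [(hstep j).1, (hstep j).2]
    exact exists_isLocalizedModule_subquotient _ _ S P.primeCompl f
  have supportDim_add (j : Fin m) :
      supportDim S (Subquotient (G j.castSucc) (G j.succ)) +
          Order.coheight (⟨P, hP⟩ : PrimeSpectrum R) =
        supportDim R (Subquotient (F (σ j).castSucc) (F (σ j).succ)) := by
    obtain ⟨g, _⟩ := exists_localization j
    have := nontrivial_subquotient_iff.mpr (hG j.castSucc_lt_succ).not_ge
    exact (hF.isCMModule (σ j)).supportDim_add_coheight S P g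
  refine ⟨m, G, hG0.trans ?_, hGlast.trans ?_, hG, fun j ↦ ?_, fun i j hij ↦ ?_⟩
  · rw [hF.zero, Submodule.localized'_bot]
  · rw [hF.last, Submodule.localized'_top]
  · obtain ⟨g, _⟩ := exists_localization j
    exact (hF.isCMModule (σ j)).of_isLocalizedModule S P g
  · have hlt := hF.strictMono_supportDim (hσ hij)
    simp only [← supportDim_add] at hlt
    exact lt_of_add_lt_add_right hlt

end Filtration

theorem stmt14_general (R : Type*) [CommRing R] [IsNoetherianRing R] [IsLocalRing R]
    (M : Type*) [AddCommGroup M] [Module R M] [Module.Finite R M] (S : Type*) [CommRing S]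
    [Algebra R S] [IsLocalRing S] (P : Ideal R) [P.IsPrime] [IsLocalization.AtPrime S P]
    {M' : Type*} [AddCommGroup M'] [Module R M'] [Module S M'] [IsScalarTower R S M']
    (f : M →ₗ[R] M') [IsLocalizedModule P.primeCompl f] (hM : IsSeqCM R M) : IsSeqCM S M' := by
  have : IsNoetherianRing S := IsLocalization.isNoetherianRing P.primeCompl S inferInstance
  have : Module.Finite S M' := .of_isLocalizedModule P.primeCompl f
  obtain ⟨ℓ, F, hF⟩ := (isSeqCM_iff_exists_isCMFiltration R M).mp hM
  exact (isSeqCM_iff_exists_isCMFiltration S M').mpr (hF.exists_of_isLocalizedModule S P f)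

/-- Over a Noetherian local ring, if `P ∈ Supp_R M`, the dimension filtration
of `M` localizes to the dimension filtration of `M_P` (after removing repetitions), and `M`
is sequentially Cohen-Macaulay, then `M_P` is sequentially Cohen-Macaulay over `R_P`. -/
theorem stmt14 (R : Type*) [CommRing R] [IsNoetherianRing R] [IsLocalRing R]
    (M : Type*) [AddCommGroup M] [Module R M] [Module.Finite R M] [Nontrivial M]
    (P : Ideal R) (hP : P.IsPrime) (hPsupp : ⟨P, hP⟩ ∈ Module.support R M)
    (ℓ : ℕ) (D : Fin (ℓ + 1) → Submodule R M) (hD : IsDimFiltration R M ℓ D)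
    (hloc : ∃ (ℓ' : ℕ)
      (D' : Fin (ℓ' + 1) → Submodule (Localization.AtPrime P) (LocalizedModule P.primeCompl M)),
      IsDimFiltration (Localization.AtPrime P) (LocalizedModule P.primeCompl M) ℓ' D' ∧
      ∀ j, ∃ i, D' j = (D i).localized P.primeCompl)
    (hM : IsSeqCM R M) :
    IsSeqCM (Localization.AtPrime P) (LocalizedModule P.primeCompl M) :=
  stmt14_general R M _ P (LocalizedModule.mkLinearMap P.primeCompl M) hM
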